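/- arXiv:1207.4819 — 3 statements merged into one kernel-verified Lean document; each statement's English description precedes it below -/
import Mathlib

section
/- Covering numbers of balls of low-rank symmetric matrices: For every m ≥ 1, every r ∈ {1,…,m}, every R > 0 and every ε with 0 < ε ≤ 18R, the ε-covering number of the set 𝕊_{r,m}(R) := { S : S is a symmetric m×m real matrix, rank(S) ≤ r, ‖S‖₂ ≤ R } with respect to the Hilbert–Schmidt (Frobenius) distance satisfies N(𝕊_{r,m}(R); ‖·‖₂; ε) ≤ (18R/ε)^{(m+1)·r}. -/
open Finset

noncomputable section

/-- Squared Hilbert–Schmidt (Frobenius) norm of a matrix. -/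
def hsNormSq {m : ℕ} (S : Matrix (Fin m) (Fin m) ℝ) : ℝ := ∑ u, ∑ v, (S u v) ^ 2

theorem card_sep_bound {E : Type*} [NormedAddCommGroup E] [NormedSpace ℝ E]
    [FiniteDimensional ℝ E] (s : Finset E) (ρ δ : ℝ) (hρ : 0 ≤ ρ) (hδ : 0 < δ)
    (hs : ∀ c ∈ s, ‖c‖ ≤ ρ) (h : ∀ c ∈ s, ∀ d ∈ s, c ≠ d → δ ≤ ‖c - d‖) :
    (s.card : ℝ) ≤ (1 + 2 * ρ / δ) ^ Module.finrank ℝ E := by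
  borelize E
  let μ : MeasureTheory.Measure E := MeasureTheory.Measure.addHaar
  have hδ2 : 0 < δ / 2 := by positivity
  have hpos : 0 < ρ + δ / 2 := by positivity
  have D : Set.Pairwise (s : Set E)
      (Function.onFun Disjoint fun c => Metric.ball (c : E) (δ / 2)) := by
    rintro c hc d hd hcd
    apply Metric.ball_disjoint_ball
    rw [dist_eq_norm]
    linarith [h c hc d hd hcd]
  have A_subset : (⋃ c ∈ s, Metric.ball (c : E) (δ / 2)) ⊆ Metric.ball (0 : E) (ρ + δ / 2) := by
    refine Set.iUnion₂_subset fun x hx => ?_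
    apply Metric.ball_subset_ball'
    rw [dist_zero_right]
    linarith [hs x hx]
  have I : (s.card : ENNReal) * ENNReal.ofReal ((δ / 2) ^ Module.finrank ℝ E)
        * μ (Metric.ball 0 1) ≤
      ENNReal.ofReal ((ρ + δ / 2) ^ Module.finrank ℝ E) * μ (Metric.ball 0 1) :=
    calc
      _ = μ (⋃ c ∈ s, Metric.ball (c : E) (δ / 2)) := by
        rw [MeasureTheory.measure_biUnion_finset D fun c _ => measurableSet_ball]
        simp only [μ.addHaar_ball_of_pos _ hδ2]
        simp only [Finset.sum_const, nsmul_eq_mul, mul_assoc]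
      _ ≤ μ (Metric.ball (0 : E) (ρ + δ / 2)) := MeasureTheory.measure_mono A_subset
      _ = _ := by
        simp only [μ.addHaar_ball_of_pos _ hpos]
  have J : (s.card : ENNReal) * ENNReal.ofReal ((δ / 2) ^ Module.finrank ℝ E)
      ≤ ENNReal.ofReal ((ρ + δ / 2) ^ Module.finrank ℝ E) :=
    (ENNReal.mul_le_mul_iff_left (Metric.measure_ball_pos _ _ zero_lt_one).ne'
      MeasureTheory.measure_ball_lt_top.ne).1 I
  have K := ENNReal.toReal_le_of_le_ofReal (pow_nonneg hpos.le _) J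
  rw [ENNReal.toReal_mul, ENNReal.toReal_natCast, ENNReal.toReal_ofReal (by positivity)] at K
  have e : 1 + 2 * ρ / δ = (ρ + δ / 2) / (δ / 2) := by field_simp; ring
  rw [e, div_pow, le_div_iff₀ (by positivity)]
  exact K

theorem exists_net {E : Type*} [NormedAddCommGroup E] [NormedSpace ℝ E]
    [FiniteDimensional ℝ E] (A : Set E) (ρ δ : ℝ) (hρ : 0 ≤ ρ) (hδ : 0 < δ)
    (hA : ∀ c ∈ A, ‖c‖ ≤ ρ) :
    ∃ s : Finset E, (s.card : ℝ) ≤ (1 + 2 * ρ / δ) ^ Module.finrank ℝ E ∧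
      (∀ c ∈ s, c ∈ A) ∧ ∀ x ∈ A, ∃ y ∈ s, ‖x - y‖ ≤ δ := by
  classical
  let P : Set ℕ := {n | ∃ s : Finset E, s.card = n ∧ (∀ c ∈ s, c ∈ A) ∧
    ∀ c ∈ s, ∀ d ∈ s, c ≠ d → δ ≤ ‖c - d‖}
  have hb : BddAbove P := by
    refine ⟨⌊(1 + 2 * ρ / δ) ^ Module.finrank ℝ E⌋₊, ?_⟩
    rintro n ⟨s, rfl, h1, h2⟩
    exact Nat.le_floor (card_sep_bound s ρ δ hρ hδ (fun c hc => hA c (h1 c hc)) h2)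
  have hne : P.Nonempty := ⟨0, ∅, by simp⟩
  obtain ⟨s, hs, h1, h2⟩ := Nat.sSup_mem hne hb
  refine ⟨s, card_sep_bound s ρ δ hρ hδ (fun c hc => hA c (h1 c hc)) h2, h1, ?_⟩
  intro x hx
  by_contra! hcon
  have hxs : x ∉ s := fun hxs => by
    have := hcon x hxs
    simp at this
    linarith
  have : s.card + 1 ∈ P := by
    refine ⟨insert x s, Finset.card_insert_of_notMem hxs, ?_, ?_⟩
    · intro c hc
      rcases Finset.mem_insert.1 hc with rfl | hc
      · exact hx
      · exact h1 c hc
    · intro c hc d hd hcd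
      rcases Finset.mem_insert.1 hc with hc' | hc' <;>
        rcases Finset.mem_insert.1 hd with hd' | hd'
      · exact absurd (hc'.trans hd'.symm) hcd
      · rw [hc']; exact (hcon d hd').le
      · rw [hd', norm_sub_rev]; exact (hcon c hc').le
      · exact h2 c hc' d hd' hcd
  have := le_csSup hb this
  omega

theorem hs_mul_orth {m r : ℕ} (A U : Matrix (Fin m) (Fin r) ℝ)
    (hU : U.transpose * U = 1) :
    hsNormSq (A * U.transpose) = ∑ u, ∑ k, (A u k) ^ 2 := by
  have h : ∀ {p : ℕ} (M : Matrix (Fin m) (Fin p) ℝ),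
      ∑ u, ∑ v, (M u v) ^ 2 = (M * M.transpose).trace := by
    intro p M
    simp [Matrix.trace, Matrix.mul_apply, sq]
  rw [hsNormSq, h, h, Matrix.transpose_mul, Matrix.transpose_transpose, Matrix.mul_assoc,
    ← Matrix.mul_assoc U.transpose, hU, Matrix.one_mul]

theorem hs_transpose {m : ℕ} (A : Matrix (Fin m) (Fin m) ℝ) :
    hsNormSq A.transpose = hsNormSq A := by
  simp only [hsNormSq, Matrix.transpose_apply]
  exact Finset.sum_comm

theorem hs_add3 {m : ℕ} (A B C : Matrix (Fin m) (Fin m) ℝ) :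
    hsNormSq (A + B + C) ≤ 3 * (hsNormSq A + hsNormSq B + hsNormSq C) := by
  simp only [hsNormSq, ← Finset.sum_add_distrib, Finset.mul_sum]
  refine Finset.sum_le_sum fun i _ => Finset.sum_le_sum fun j _ => ?_
  simp only [Matrix.add_apply]
  nlinarith [sq_nonneg (A i j - B i j), sq_nonneg (A i j - C i j), sq_nonneg (B i j - C i j)]

theorem symm_factor {m r : ℕ} (hrm : r ≤ m) (S : Matrix (Fin m) (Fin m) ℝ)
    (hS : S.IsSymm) (hr : S.rank ≤ r) :
    ∃ (U : Matrix (Fin m) (Fin r) ℝ) (l : Fin r → ℝ), U.transpose * U = 1 ∧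
      S = U * Matrix.diagonal l * U.transpose := by
  have hA : S.IsHermitian := by
    rw [Matrix.IsHermitian, Matrix.conjTranspose_eq_transpose_of_trivial]; exact hS
  have hsp := hA.spectral_theorem
  rw [Unitary.conjStarAlgAut_apply] at hsp
  have hQ : (star (hA.eigenvectorUnitary : Matrix (Fin m) (Fin m) ℝ)) *
    (hA.eigenvectorUnitary : Matrix (Fin m) (Fin m) ℝ) = 1 := by simp
  rw [hA.rank_eq_card_non_zero_eigs, Fintype.card_subtype] at hr
  generalize (hA.eigenvectorUnitary : Matrix (Fin m) (Fin m) ℝ) = Q at hsp hQ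
  generalize hA.eigenvalues = ev at hsp hr
  obtain ⟨t, ht, htc⟩ := Finset.exists_superset_card_eq hr (by simpa using hrm)
  let e := t.orderEmbOfFin htc
  refine ⟨Q.submatrix id e, fun k => ev (e k), ?_, ?_⟩
  · ext a b
    have := congrFun (congrFun hQ (e a)) (e b)
    simp [Matrix.mul_apply, Matrix.star_apply, Matrix.one_apply] at this ⊢
    exact this
  · ext i j
    conv_lhs => rw [hsp]
    rw [Matrix.mul_apply, Matrix.mul_apply]
    simp only [Matrix.mul_diagonal, Matrix.star_apply, Matrix.transpose_apply,
      Matrix.submatrix_apply, Function.comp_apply, star_trivial, RCLike.ofReal_real_eq_id, id]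
    have h1 : ∑ k : Fin r, Q i (e k) * ev (e k) * Q j (e k) =
        ∑ x ∈ Finset.univ.map e.toEmbedding, Q i x * ev x * Q j x := by
      rw [Finset.sum_map]; rfl
    have h2 : Finset.univ.map e.toEmbedding = t := by
      simp [e]
    rw [h1, h2]
    symm
    apply Finset.sum_subset (Finset.subset_univ _)
    intro x _ hx
    have : ev x = 0 := by
      by_contra hne
      exact hx (ht (by simp [hne]))
    simp [this]

theorem hs_mul_diag {m r : ℕ} (A U : Matrix (Fin m) (Fin r) ℝ) (l : Fin r → ℝ)
    (hU : U.transpose * U = 1) :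
    hsNormSq (A * Matrix.diagonal l * U.transpose) = ∑ k, (l k) ^ 2 * ∑ u, (A u k) ^ 2 := by
  rw [hs_mul_orth _ _ hU, Finset.sum_comm]
  refine Finset.sum_congr rfl fun k _ => ?_
  rw [Finset.mul_sum]
  refine Finset.sum_congr rfl fun u _ => ?_
  rw [Matrix.mul_diagonal]; ring

theorem orth_col {m r : ℕ} (U : Matrix (Fin m) (Fin r) ℝ)
    (hU : U.transpose * U = 1) (k : Fin r) : ∑ u, (U u k) ^ 2 = 1 := by
  have := congrFun (congrFun hU k) k
  simp [Matrix.mul_apply] at this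
  simpa [sq] using this

/-- matrix with given columns -/
def colMat {m r : ℕ} (x : Fin r → EuclideanSpace ℝ (Fin m)) : Matrix (Fin m) (Fin r) ℝ :=
  fun i k => x k i

theorem approx_bound {m r : ℕ} (U V : Matrix (Fin m) (Fin r) ℝ) (l p : Fin r → ℝ) (R ε : ℝ)
    (hR : 0 < R)
    (hU : U.transpose * U = 1) (hV : V.transpose * V = 1)
    (hl : ∑ k, (l k) ^ 2 ≤ R ^ 2) (hp : ∑ k, (p k) ^ 2 ≤ R ^ 2)
    (hUV : ∀ k, ∑ u, ((U - V) u k) ^ 2 ≤ (ε / (3 * R)) ^ 2)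
    (hlp : ∑ k, (l k - p k) ^ 2 ≤ (ε / 3) ^ 2) :
    hsNormSq (U * Matrix.diagonal l * U.transpose - V * Matrix.diagonal p * V.transpose)
      ≤ ε ^ 2 := by
  have key : U * Matrix.diagonal l * U.transpose - V * Matrix.diagonal p * V.transpose =
      (U - V) * Matrix.diagonal l * U.transpose +
      V * Matrix.diagonal (fun k => l k - p k) * U.transpose +
      ((U - V) * Matrix.diagonal p * V.transpose).transpose := by
    rw [← Matrix.diagonal_sub]
    simp only [Matrix.transpose_mul, Matrix.transpose_transpose, Matrix.diagonal_transpose,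
      Matrix.transpose_sub, Matrix.sub_mul, Matrix.mul_sub, Matrix.mul_assoc]
    abel
  rw [key]
  refine (hs_add3 _ _ _).trans ?_
  rw [hs_transpose, hs_mul_diag _ _ _ hU, hs_mul_diag _ _ _ hU, hs_mul_diag _ _ _ hV]
  have hgen : ∀ q : Fin r → ℝ, ∑ k, (q k) ^ 2 ≤ R ^ 2 →
      ∑ k, (q k) ^ 2 * ∑ u, ((U - V) u k) ^ 2 ≤ (ε / 3) ^ 2 := by
    intro q hq
    calc ∑ k, (q k) ^ 2 * ∑ u, ((U - V) u k) ^ 2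
        ≤ ∑ k, (q k) ^ 2 * (ε / (3 * R)) ^ 2 :=
          Finset.sum_le_sum fun k _ => mul_le_mul_of_nonneg_left (hUV k) (sq_nonneg _)
      _ = (∑ k, (q k) ^ 2) * (ε / (3 * R)) ^ 2 := by rw [Finset.sum_mul]
      _ ≤ R ^ 2 * (ε / (3 * R)) ^ 2 := mul_le_mul_of_nonneg_right hq (sq_nonneg _)
      _ = (ε / 3) ^ 2 := by field_simp
  have h1 := hgen l hl
  have h3 := hgen p hp
  simp only [orth_col V hV, mul_one]
  nlinarith

/-- **Covering numbers of balls of low-rank symmetric matrices:** the set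
`𝕊_{r,m}(R)` of symmetric `m×m` matrices of rank at most `r` and Hilbert–Schmidt
norm at most `R` admits an `ε`-net of cardinality at most `(18R/ε)^{(m+1)r}`. -/
theorem covering_low_rank_symmetric :
    ∀ (m r : ℕ) (R ε : ℝ),
      1 ≤ m → 1 ≤ r → r ≤ m → 0 < R → 0 < ε → ε ≤ 18 * R →
      ∃ net : Finset (Matrix (Fin m) (Fin m) ℝ),
        (net.card : ℝ) ≤ (18 * R / ε) ^ ((m + 1) * r) ∧
        ∀ S : Matrix (Fin m) (Fin m) ℝ,
          S.IsSymm → S.rank ≤ r → hsNormSq S ≤ R ^ 2 →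
          ∃ T ∈ net, hsNormSq (S - T) ≤ ε ^ 2 := by
  classical
  intro m r R ε hm hr hrm hR hε hεR
  have hone : 1 ≤ 18 * R / ε := by rw [le_div_iff₀ hε]; linarith
  by_cases hbig : R ≤ ε
  · refine ⟨{0}, ?_, ?_⟩
    · simpa using one_le_pow₀ hone
    · intro S _ _ hS
      refine ⟨0, by simp, ?_⟩
      rw [sub_zero]
      nlinarith
  push Not at hbig
  obtain ⟨N1, hN1, hN1A, hN1c⟩ := exists_net
    {x : Fin r → EuclideanSpace ℝ (Fin m) | (colMat x).transpose * colMat x = 1}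
    1 (ε / (3 * R)) zero_le_one (by positivity) (by
      intro x hx
      rw [pi_norm_le_iff_of_nonneg zero_le_one]
      intro k
      rw [EuclideanSpace.norm_eq, Real.sqrt_le_one]
      have := orth_col _ hx k
      simpa [colMat] using this.le)
  obtain ⟨N2, hN2, hN2A, hN2c⟩ := exists_net
    {x : EuclideanSpace ℝ (Fin r) | ‖x‖ ≤ R} R (ε / 3) hR.le (by positivity) (fun _ h => h)
  refine ⟨(N1 ×ˢ N2).image
    (fun q => colMat q.1 * Matrix.diagonal (fun k => q.2 k) * (colMat q.1).transpose), ?_, ?_⟩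
  · have hb1 : 1 + 2 * 1 / (ε / (3 * R)) ≤ 18 * R / ε := by
      have : 1 + 2 * 1 / (ε / (3 * R)) = (ε + 6 * R) / ε := by field_simp; ring
      rw [this]; gcongr; linarith
    have hb2 : 1 + 2 * R / (ε / 3) ≤ 18 * R / ε := by
      have : 1 + 2 * R / (ε / 3) = (ε + 6 * R) / ε := by field_simp; ring
      rw [this]; gcongr; linarith
    have hf1 : Module.finrank ℝ (Fin r → EuclideanSpace ℝ (Fin m)) = m * r := by
      simp [Module.finrank_pi_fintype, mul_comm]
    have hf2 : Module.finrank ℝ (EuclideanSpace ℝ (Fin r)) = r := by simp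
    rw [hf1] at hN1
    rw [hf2] at hN2
    calc _ ≤ ((N1 ×ˢ N2).card : ℝ) := by exact_mod_cast Finset.card_image_le
      _ = (N1.card : ℝ) * N2.card := by rw [Finset.card_product]; push_cast; rfl
      _ ≤ (18 * R / ε) ^ (m * r) * (18 * R / ε) ^ r := by
        apply mul_le_mul
        · exact hN1.trans (pow_le_pow_left₀ (by positivity) hb1 _)
        · exact hN2.trans (pow_le_pow_left₀ (by positivity) hb2 _)
        · positivity
        · positivity
      _ = _ := by rw [← pow_add]; congr 1; ring
  · intro S hS hSr hSn
    obtain ⟨U, l, hU, rfl⟩ := symm_factor hrm S hS hSr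
    have hl : ∑ k, (l k) ^ 2 ≤ R ^ 2 := by
      rw [hs_mul_diag _ _ _ hU] at hSn
      simpa [orth_col U hU] using hSn
    obtain ⟨V, hV, hUV⟩ := hN1c (fun k => WithLp.toLp 2 (fun i => U i k)) hU
    obtain ⟨p, hp, hlp⟩ := hN2c (WithLp.toLp 2 l) (by
      simp only [Set.mem_ofPred_eq]
      rw [EuclideanSpace.norm_eq, Real.sqrt_le_left hR.le]
      simpa using hl)
    refine ⟨_, Finset.mem_image_of_mem _ (Finset.mk_mem_product hV hp), ?_⟩
    refine approx_bound U (colMat V) l (fun k => p k) R ε hR hU (hN1A V hV) hl ?_ ?_ ?_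
    · have := hN2A p hp
      simp only [Set.mem_ofPred_eq] at this
      rw [EuclideanSpace.norm_eq, Real.sqrt_le_left hR.le] at this
      simpa using this
    · intro k
      have := (pi_norm_le_iff_of_nonneg (by positivity)).1 hUV k
      rw [EuclideanSpace.norm_eq, Real.sqrt_le_left (by positivity)] at this
      simpa [colMat] using this
    · rw [EuclideanSpace.norm_eq, Real.sqrt_le_left (by positivity)] at hlp
      simpa using hlp

end
end

section
/- Properties of the lower-bound construction kernels: Let l ∈ {2,…,m}, l' := ⌊l/2⌋, l'' := l − l', let r ∈ {1,…,l''} and κ > 0. For σ ∈ {−1,+1}^{l'×r}, define K_σ(u,v) := K'_σ(u,v) + K'_σ(v,u), where K'_σ(u,v) := κ·∑_{i=1}^{l'} ∑_{j=1}^{r} σ_{ij}·φ_i(u)·∑_{k=0}^{⌊l''/r⌋−1} φ_{l'+rk+j}(v). Then: (i) ‖K_σ‖₂² ≤ κ²·l² for every σ; (ii) ‖W^{1/2}K_σ‖₂² ≤ λ_l·‖K_σ‖₂² ≤ λ_l·κ²·l² for every σ; and (iii) for any σ, σ' ∈ {−1,+1}^{l'×r} with ∑_{i=1}^{l'}∑_{j=1}^{r}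 1{σ_{ij} ≠ σ'_{ij}} ≥ l'·r/16, one has ‖K_σ − K_{σ'}‖₂² ≥ 4κ²·(l'·r/16)·⌊l''/r⌋ ≥ κ²·l²/64. -/
open Finset

noncomputable section

/-- Squared Sobolev norm `‖W^{1/2}S‖₂² = ∑ₖ λₖ ‖S φₖ‖²`, from the eigendata of `W`. -/
def sobolevHSSq {m : ℕ} (lam : ℕ → ℝ) (φ : ℕ → Fin m → ℝ)
    (S : Matrix (Fin m) (Fin m) ℝ) : ℝ :=
  ∑ k ∈ Finset.Icc 1 m, lam k * ∑ u, (S.mulVec (φ k) u) ^ 2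

/-- `φ₁,…,φ_m` are orthonormal in `ℝ^V`. -/
def OrthonormalFamily (m : ℕ) (φ : ℕ → Fin m → ℝ) : Prop :=
  ∀ j ∈ Finset.Icc 1 m, ∀ k ∈ Finset.Icc 1 m,
    (∑ v, φ j v * φ k v) = if j = k then (1 : ℝ) else 0

/-- The kernel `K_σ(u,v) = K'_σ(u,v) + K'_σ(v,u)` with
`K'_σ(u,v) = κ ∑_{i=1}^{l'} ∑_{j=1}^{r} σ_{ij} φ_i(u) ∑_{k=0}^{⌊l''/r⌋−1} φ_{l'+rk+j}(v)`. -/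
def Kconstr {m : ℕ} (l' r q : ℕ) (κ : ℝ) (φ : ℕ → Fin m → ℝ)
    (σ : ℕ → ℕ → ℝ) : Matrix (Fin m) (Fin m) ℝ :=
  Matrix.of fun u v =>
    (κ * ∑ i ∈ Finset.Icc 1 l', ∑ j ∈ Finset.Icc 1 r,
        σ i j * φ i u * ∑ k ∈ Finset.range q, φ (l' + r * k + j) v) +
      (κ * ∑ i ∈ Finset.Icc 1 l', ∑ j ∈ Finset.Icc 1 r,
        σ i j * φ i v * ∑ k ∈ Finset.range q, φ (l' + r * k + j) u)

lemma hh_pars {m : ℕ} {φ : ℕ → Fin m → ℝ} (h : OrthonormalFamily m φ) (x : ℕ → ℝ) :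
    ∑ v, (∑ b ∈ Finset.Icc 1 m, x b * φ b v) ^ 2 = ∑ b ∈ Finset.Icc 1 m, x b ^ 2 := by
  have h1 : ∀ v, (∑ b ∈ Finset.Icc 1 m, x b * φ b v) ^ 2
      = ∑ b ∈ Finset.Icc 1 m, ∑ c ∈ Finset.Icc 1 m, x b * x c * (φ b v * φ c v) := by
    intro v
    rw [sq, Finset.sum_mul_sum]
    refine Finset.sum_congr rfl fun b _ => Finset.sum_congr rfl fun c _ => by ring
  simp_rw [h1]
  rw [Finset.sum_comm]
  refine Finset.sum_congr rfl fun b hb => ?_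
  rw [Finset.sum_comm]
  have h2 : ∀ c ∈ Finset.Icc 1 m, ∑ v, x b * x c * (φ b v * φ c v)
      = if b = c then x b * x c else 0 := by
    intro c hc
    rw [← Finset.mul_sum, h b hb c hc]
    split_ifs <;> simp
  rw [Finset.sum_congr rfl h2, Finset.sum_ite_eq, if_pos hb, sq]

lemma hh_reindex (l' r q : ℕ) (hr : 1 ≤ r) (g : ℕ → ℕ → ℝ) :
    ∑ j ∈ Finset.Icc 1 r, ∑ k ∈ Finset.range q, g j (l' + r * k + j)
      = ∑ b ∈ Finset.Ioc l' (l' + r * q), g ((b - l' - 1) % r + 1) b := by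
  rw [← Finset.sum_product']
  refine Finset.sum_nbij' (fun p => l' + r * p.2 + p.1)
    (fun b => ((b - l' - 1) % r + 1, (b - l' - 1) / r)) ?_ ?_ ?_ ?_ ?_
  · rintro ⟨j, k⟩ h
    simp only [Finset.mem_product, Finset.mem_Icc, Finset.mem_range, Finset.mem_Ioc] at h ⊢
    have : r * (k + 1) ≤ r * q := Nat.mul_le_mul_left _ h.2
    rw [mul_add] at this
    omega
  · intro b h
    simp only [Finset.mem_product, Finset.mem_Icc, Finset.mem_range, Finset.mem_Ioc] at h ⊢
    have := Nat.mod_lt (b - l' - 1) hr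
    refine ⟨by omega, ?_⟩
    rw [Nat.div_lt_iff_lt_mul hr, mul_comm]
    omega
  · rintro ⟨j, k⟩ h
    simp only [Finset.mem_product, Finset.mem_Icc, Finset.mem_range] at h
    have e : l' + r * k + j - l' - 1 = (j - 1) + r * k := by omega
    simp only [e, Nat.add_mul_mod_self_left, Nat.add_mul_div_left _ _ hr]
    rw [Nat.mod_eq_of_lt (by omega), Nat.div_eq_of_lt (by omega)]
    ext <;> simp <;> omega
  · intro b h
    simp only [Finset.mem_Ioc] at h
    have := Nat.mod_add_div (b - l' - 1) r
    simp only
    omega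
  · rintro ⟨j, k⟩ h
    simp only [Finset.mem_product, Finset.mem_Icc, Finset.mem_range] at h
    have e : l' + r * k + j - l' - 1 = (j - 1) + r * k := by omega
    simp only [e, Nat.add_mul_mod_self_left]
    rw [Nat.mod_eq_of_lt (by omega)]
    congr 1
    omega

/-- one-sided coefficients -/
def hhS (l' r q : ℕ) (τ : ℕ → ℕ → ℝ) (a b : ℕ) : ℝ :=
  if a ∈ Finset.Icc 1 l' ∧ b ∈ Finset.Ioc l' (l' + r * q) then τ a ((b - l' - 1) % r + 1) else 0

lemma hh_sum (m l' r q : ℕ) (hr : 1 ≤ r) (hm : l' + r * q ≤ m) (τ : ℕ → ℕ → ℝ)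
    (F : ℝ → ℕ → ℕ → ℝ) (hF : ∀ a b, F 0 a b = 0) :
    ∑ i ∈ Finset.Icc 1 l', ∑ j ∈ Finset.Icc 1 r, ∑ k ∈ Finset.range q,
        F (τ i j) i (l' + r * k + j)
      = ∑ a ∈ Finset.Icc 1 m, ∑ b ∈ Finset.Icc 1 m, F (hhS l' r q τ a b) a b := by
  have h1 : ∀ i ∈ Finset.Icc 1 l', ∑ j ∈ Finset.Icc 1 r, ∑ k ∈ Finset.range q,
        F (τ i j) i (l' + r * k + j) = ∑ b ∈ Finset.Icc 1 m, F (hhS l' r q τ i b) i b := by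
    intro i hi
    rw [hh_reindex l' r q hr (fun j b => F (τ i j) i b)]
    rw [← Finset.sum_subset (s₁ := Finset.Ioc l' (l' + r * q)) (s₂ := Finset.Icc 1 m)]
    · refine Finset.sum_congr rfl fun b hb => ?_
      rw [hhS, if_pos ⟨hi, hb⟩]
    · intro b hb
      simp only [Finset.mem_Ioc, Finset.mem_Icc] at hb ⊢
      omega
    · intro b _ hb
      rw [hhS, if_neg (fun h => hb h.2), hF]
  rw [Finset.sum_congr rfl h1]
  refine Finset.sum_subset ?_ ?_
  · intro b hb
    simp only [Finset.mem_Icc] at hb ⊢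
    omega
  · intro a _ ha
    refine Finset.sum_eq_zero fun b _ => ?_
    rw [hhS, if_neg (fun h => ha h.1), hF]

/-- coefficients of the kernel -/
def hhC (l' r q : ℕ) (κ : ℝ) (τ : ℕ → ℕ → ℝ) (a b : ℕ) : ℝ :=
  κ * (hhS l' r q τ a b + hhS l' r q τ b a)

lemma hh_K {m l' r q : ℕ} (hr : 1 ≤ r) (hm : l' + r * q ≤ m) (κ : ℝ) (φ : ℕ → Fin m → ℝ)
    (τ : ℕ → ℕ → ℝ) (u v : Fin m) :
    Kconstr l' r q κ φ τ u v = ∑ b ∈ Finset.Icc 1 m,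
      (∑ a ∈ Finset.Icc 1 m, hhC l' r q κ τ a b * φ a u) * φ b v := by
  have h1 : ∀ u v, ∑ i ∈ Finset.Icc 1 l', ∑ j ∈ Finset.Icc 1 r,
        τ i j * φ i u * ∑ k ∈ Finset.range q, φ (l' + r * k + j) v
      = ∑ a ∈ Finset.Icc 1 m, ∑ b ∈ Finset.Icc 1 m, hhS l' r q τ a b * φ a u * φ b v := by
    intro u v
    simp_rw [Finset.mul_sum]
    exact hh_sum m l' r q hr hm τ (fun t a b => t * φ a u * φ b v) (by simp)
  simp only [Kconstr, Matrix.of_apply]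
  rw [h1, h1, Finset.sum_comm, ← mul_add, ← Finset.sum_add_distrib, Finset.mul_sum]
  refine Finset.sum_congr rfl fun b _ => ?_
  rw [← Finset.sum_add_distrib, Finset.mul_sum, Finset.sum_mul]
  refine Finset.sum_congr rfl fun a _ => ?_
  rw [hhC]
  ring

lemma hh_hs0 {m l' r q : ℕ} (hr : 1 ≤ r) (hm : l' + r * q ≤ m) (κ : ℝ) {φ : ℕ → Fin m → ℝ}
    (h : OrthonormalFamily m φ) (τ : ℕ → ℕ → ℝ) :
    hsNormSq (Kconstr l' r q κ φ τ) =
      ∑ b ∈ Finset.Icc 1 m, ∑ a ∈ Finset.Icc 1 m, hhC l' r q κ τ a b ^ 2 := by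
  unfold hsNormSq
  simp_rw [hh_K hr hm, hh_pars h]
  rw [Finset.sum_comm]
  refine Finset.sum_congr rfl fun b _ => ?_
  exact hh_pars h (fun a => hhC l' r q κ τ a b)

lemma hh_hs {m l' r q : ℕ} (hr : 1 ≤ r) (hm : l' + r * q ≤ m) (κ : ℝ) {φ : ℕ → Fin m → ℝ}
    (h : OrthonormalFamily m φ) (τ : ℕ → ℕ → ℝ) :
    hsNormSq (Kconstr l' r q κ φ τ) =
      2 * κ ^ 2 * q * ∑ i ∈ Finset.Icc 1 l', ∑ j ∈ Finset.Icc 1 r, τ i j ^ 2 := by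
  rw [hh_hs0 hr hm κ h]
  have h0 := hh_sum m l' r q hr hm τ (fun t _ _ => t ^ 2) (by simp)
  simp only [Finset.sum_const, Finset.card_range, nsmul_eq_mul, ← Finset.mul_sum] at h0
  have h2 : ∀ a b, hhC l' r q κ τ a b ^ 2
      = κ ^ 2 * (hhS l' r q τ a b ^ 2) + κ ^ 2 * (hhS l' r q τ b a ^ 2) := by
    intro a b
    have : hhS l' r q τ a b * hhS l' r q τ b a = 0 := by
      unfold hhS
      simp only [Finset.mem_Icc, Finset.mem_Ioc]
      split_ifs
      · omega
      all_goals simp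
    rw [hhC]
    linear_combination 2 * κ ^ 2 * this
  simp_rw [h2, Finset.sum_add_distrib, ← Finset.mul_sum]
  rw [Finset.sum_comm, ← h0]
  ring

lemma hh_sob {m l' r q : ℕ} (hr : 1 ≤ r) (hm : l' + r * q ≤ m) (κ : ℝ) {φ : ℕ → Fin m → ℝ}
    (h : OrthonormalFamily m φ) (τ : ℕ → ℕ → ℝ) (lam : ℕ → ℝ) :
    sobolevHSSq lam φ (Kconstr l' r q κ φ τ) =
      ∑ b ∈ Finset.Icc 1 m, lam b * ∑ a ∈ Finset.Icc 1 m, hhC l' r q κ τ a b ^ 2 := by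
  unfold sobolevHSSq
  refine Finset.sum_congr rfl fun b hb => ?_
  congr 1
  rw [← hh_pars h (fun a => hhC l' r q κ τ a b)]
  refine Finset.sum_congr rfl fun u _ => ?_
  congr 1
  simp only [Matrix.mulVec, dotProduct]
  simp_rw [hh_K hr hm, Finset.sum_mul _ _ (φ b _)]
  rw [Finset.sum_comm]
  have h3 : ∀ c ∈ Finset.Icc 1 m,
      ∑ v, (∑ a ∈ Finset.Icc 1 m, hhC l' r q κ τ a c * φ a u) * φ c v * φ b v
      = if c = b then ∑ a ∈ Finset.Icc 1 m, hhC l' r q κ τ a c * φ a u else 0 := by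
    intro c hc
    simp_rw [mul_assoc (∑ a ∈ Finset.Icc 1 m, hhC l' r q κ τ a c * φ a u)]
    rw [← Finset.mul_sum, h c hc b hb]
    split_ifs <;> simp
  rw [Finset.sum_congr rfl h3, Finset.sum_ite_eq', if_pos hb]

lemma hh_sub {m l' r q : ℕ} (κ : ℝ) (φ : ℕ → Fin m → ℝ) (σ σ' : ℕ → ℕ → ℝ) :
    Kconstr l' r q κ φ σ - Kconstr l' r q κ φ σ'
      = Kconstr l' r q κ φ (fun i j => σ i j - σ' i j) := by
  ext u v
  simp only [Kconstr, Matrix.sub_apply, Matrix.of_apply, sub_mul, Finset.sum_sub_distrib]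
  ring

/-- **Properties of the kernels used in the lower-bound construction.** -/
theorem lower_bound_construction_kernels :
    ∀ (m l r : ℕ) (κ : ℝ) (lam : ℕ → ℝ) (φ : ℕ → Fin m → ℝ) (σ σ' : ℕ → ℕ → ℝ),
      2 ≤ l → l ≤ m → 1 ≤ r → r ≤ l - l / 2 → 0 < κ →
      OrthonormalFamily m φ →
      (∀ k ∈ Finset.Icc 1 m, 0 ≤ lam k) →
      (∀ k k' : ℕ, 1 ≤ k → k ≤ k' → k' ≤ m → lam k ≤ lam k') →
      (∀ i j : ℕ, σ i j = 1 ∨ σ i j = -1) →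
      (∀ i j : ℕ, σ' i j = 1 ∨ σ' i j = -1) →
      -- (i)
      (hsNormSq (Kconstr (l / 2) r ((l - l / 2) / r) κ φ σ) ≤ κ ^ 2 * (l : ℝ) ^ 2) ∧
      -- (ii)
      (sobolevHSSq lam φ (Kconstr (l / 2) r ((l - l / 2) / r) κ φ σ) ≤
          lam l * hsNormSq (Kconstr (l / 2) r ((l - l / 2) / r) κ φ σ) ∧
        sobolevHSSq lam φ (Kconstr (l / 2) r ((l - l / 2) / r) κ φ σ) ≤
          lam l * κ ^ 2 * (l : ℝ) ^ 2) ∧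
      -- (iii)
      (((l / 2 * r : ℕ) : ℝ) / 16 ≤
          (((Finset.Icc 1 (l / 2)) ×ˢ (Finset.Icc 1 r)).filter
            (fun p => σ p.1 p.2 ≠ σ' p.1 p.2)).card →
        4 * κ ^ 2 * (((l / 2 * r : ℕ) : ℝ) / 16) * (((l - l / 2) / r : ℕ) : ℝ) ≤
            hsNormSq (Kconstr (l / 2) r ((l - l / 2) / r) κ φ σ -
              Kconstr (l / 2) r ((l - l / 2) / r) κ φ σ') ∧
          κ ^ 2 * (l : ℝ) ^ 2 / 64 ≤
            4 * κ ^ 2 * (((l / 2 * r : ℕ) : ℝ) / 16) * (((l - l / 2) / r : ℕ) : ℝ)) := by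
  intro m l r κ lam φ σ σ' hl hlm hr hrl hκ ho hlam hmono hσ hσ'
  have hrq : r * ((l - l / 2) / r) ≤ l - l / 2 := Nat.mul_div_le _ _
  have hrq2 : l - l / 2 < 2 * (r * ((l - l / 2) / r)) := by
    have h1 := Nat.lt_mul_div_succ (l - l / 2) hr
    have h2 : 1 ≤ (l - l / 2) / r := (Nat.one_le_div_iff hr).2 hrl
    have h3 := Nat.mul_le_mul_left r h2
    rw [mul_add] at h1
    omega
  have hl3 : l ≤ 3 * (l / 2) := by omega
  have hl4 : 2 * (l / 2) ≤ l := by omega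
  have hl5 : l / 2 + (l - l / 2) = l := by omega
  have hl6 : l ≤ 2 * (l - l / 2) := by omega
  generalize l / 2 = l' at *
  generalize l - l' = l'' at *
  generalize l'' / r = q at *
  have hm : l' + r * q ≤ m := by omega
  have hi : hsNormSq (Kconstr l' r q κ φ σ) ≤ κ ^ 2 * (l : ℝ) ^ 2 := by
    rw [hh_hs hr hm κ ho]
    have h1 : ∀ i j, σ i j ^ 2 = 1 := by
      intro i j
      rcases hσ i j with h | h <;> simp [h]
    simp only [h1, Finset.sum_const, Nat.card_Icc, smul_eq_mul, nsmul_eq_mul]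
    have h2 : 2 * (q * (l' * r)) ≤ l * l := by
      have e : 2 * (q * (l' * r)) = (2 * l') * (r * q) := by ring
      rw [e]
      exact Nat.mul_le_mul hl4 (by omega)
    have h3 : (2 * (q * (l' * r)) : ℝ) ≤ l * l := by exact_mod_cast h2
    have h4 := mul_le_mul_of_nonneg_left h3 (sq_nonneg κ)
    simp only [Nat.add_sub_cancel, mul_one]
    nlinarith
  have hlm' : l ∈ Finset.Icc 1 m := Finset.mem_Icc.2 ⟨by omega, hlm⟩
  have hii : sobolevHSSq lam φ (Kconstr l' r q κ φ σ) ≤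
      lam l * hsNormSq (Kconstr l' r q κ φ σ) := by
    rw [hh_sob hr hm κ ho, hh_hs0 hr hm κ ho, Finset.mul_sum]
    refine Finset.sum_le_sum fun b hb => ?_
    rw [Finset.mem_Icc] at hb
    by_cases hbl : b ≤ l
    · exact mul_le_mul_of_nonneg_right (hmono b l hb.1 hbl hlm)
        (Finset.sum_nonneg fun _ _ => sq_nonneg _)
    · have hz : ∑ a ∈ Finset.Icc 1 m, hhC l' r q κ σ a b ^ 2 = 0 := by
        refine Finset.sum_eq_zero fun a _ => ?_
        rw [hhC, hhS, hhS, if_neg, if_neg]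
        · simp
        · simp only [Finset.mem_Icc, Finset.mem_Ioc]
          omega
        · simp only [Finset.mem_Icc, Finset.mem_Ioc]
          omega
      rw [hz]
      simp
  refine ⟨hi, ⟨hii, ?_⟩, ?_⟩
  · refine hii.trans ?_
    rw [mul_assoc]
    exact mul_le_mul_of_nonneg_left hi (hlam l hlm')
  · intro hc
    constructor
    · rw [hh_sub, hh_hs hr hm κ ho, ← Finset.sum_product']
      have h1 : ∀ p ∈ Finset.Icc 1 l' ×ˢ Finset.Icc 1 r, (σ p.1 p.2 - σ' p.1 p.2) ^ 2
          = if σ p.1 p.2 ≠ σ' p.1 p.2 then (4 : ℝ) else 0 := by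
        intro p _
        rcases hσ p.1 p.2 with h | h <;> rcases hσ' p.1 p.2 with h' | h' <;>
          rw [h, h'] <;> norm_num
      rw [Finset.sum_congr rfl h1, ← Finset.sum_filter, Finset.sum_const, nsmul_eq_mul]
      have hn : 0 ≤ κ ^ 2 * (q : ℝ) := by positivity
      have h4 := mul_le_mul_of_nonneg_left hc hn
      have h5 : 0 ≤ κ ^ 2 * (q : ℝ) * (((l' * r : ℕ) : ℝ) / 16) := by positivity
      nlinarith
    · have h2 : l * l ≤ 16 * (l' * r * q) := by
        have e : 16 * (l' * r * q) * 3 = (3 * l') * (4 * (r * q)) * 4 := by ring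
        have h3 : l * l ≤ (3 * l') * (4 * (r * q)) := Nat.mul_le_mul hl3 (by omega)
        omega
      have h3 : (l * l : ℝ) ≤ 16 * (l' * r * q) := by exact_mod_cast h2
      have h4 := mul_le_mul_of_nonneg_left h3 (sq_nonneg κ)
      push_cast
      nlinarith

end
end

section
/- Expected operator norm of sums of i.i.d. bounded centered random symmetric matrices: Let m ≥ 1 and let Z, Z₁, …, Zₙ be i.i.d. random symmetric m×m real matrices with E Z = 0, ‖Z‖ ≤ U almost surely for some U > 0, and σ_Z² := ‖E Z²‖. Then E‖ n⁻¹·∑_{j=1}^n Z_j ‖ ≤ 4·max( σ_Z·√(log(2m)/n), U·log(2m)/n ), where ‖·‖ denotes the operator (spectral) norm. -/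
open MeasureTheory Finset
open scoped ENNReal NNReal
noncomputable section
/-- The operator (spectral) norm of a square real matrix, via its action on
Euclidean space. -/
def opNorm {m : ℕ} (A : Matrix (Fin m) (Fin m) ℝ) : ℝ :=
  ‖Matrix.toEuclideanCLM (𝕜 := ℝ) A‖

namespace MB
open Matrix

section Alg
variable {m : ℕ}

lemma tr_sq_le (X : Matrix (Fin m) (Fin m) ℝ) : (X * X).trace ≤ (X * Xᵀ).trace := by
  have h : 0 ≤ ((X - Xᵀ) * (X - Xᵀ)ᵀ).trace := by
    have := (posSemidef_self_mul_conjTranspose (X - Xᵀ)).trace_nonneg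
    simpa [conjTranspose_eq_transpose_of_trivial] using this
  have e : ((X - Xᵀ) * (X - Xᵀ)ᵀ).trace = 2 * (X * Xᵀ).trace - 2 * (X * X).trace := by
    have h1 : (Xᵀ * X).trace = (X * Xᵀ).trace := trace_mul_comm _ _
    have h2 : (Xᵀ * Xᵀ).trace = (X * X).trace := by
      rw [← transpose_mul, trace_transpose]
    simp only [transpose_sub, transpose_transpose, sub_mul, mul_sub, trace_sub, h1, h2]
    ring
  linarith

lemma tr_mul_le (X Y : Matrix (Fin m) (Fin m) ℝ) (hX : X.IsSymm) (hY : Y.IsSymm) :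
    (X * Y).trace ≤ ((X * X).trace + (Y * Y).trace) / 2 := by
  have h : 0 ≤ ((X - Y) * (X - Y)ᵀ).trace := by
    have := (posSemidef_self_mul_conjTranspose (X - Y)).trace_nonneg
    simpa [conjTranspose_eq_transpose_of_trivial] using this
  have h1 : (Y * X).trace = (X * Y).trace := trace_mul_comm _ _
  simp only [transpose_sub, hX.eq, hY.eq, sub_mul, mul_sub, trace_sub, h1] at h
  linarith

lemma tr_pow_comm (A B : Matrix (Fin m) (Fin m) ℝ) (k : ℕ) :
    ((A * B) ^ k).trace = ((B * A) ^ k).trace := by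
  cases k with
  | zero => simp
  | succ k =>
    have h : ∀ j : ℕ, (A * B) ^ j * A = A * (B * A) ^ j := by
      intro j
      induction j with
      | zero => simp
      | succ j ih => rw [pow_succ', mul_assoc, ih, pow_succ' (B * A)]; simp only [mul_assoc]
    rw [pow_succ, ← mul_assoc, h, trace_mul_comm, ← mul_assoc, ← pow_succ']

lemma main_ind (k : ℕ) :
    (∀ X : Matrix (Fin m) (Fin m) ℝ, (X ^ (2 ^ (k+1))).trace ≤ ((X * Xᵀ) ^ (2 ^ k)).trace) ∧
    (∀ A B : Matrix (Fin m) (Fin m) ℝ, A.IsSymm → B.IsSymm →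
      ((A * B) ^ (2 ^ k)).trace ≤ (A ^ (2 ^ k) * B ^ (2 ^ k)).trace) := by
  induction k with
  | zero =>
    refine ⟨fun X => ?_, fun A B _ _ => by simp⟩
    simpa [pow_two] using tr_sq_le X
  | succ k ih =>
    obtain ⟨hP, hQ⟩ := ih
    constructor
    · intro X
      have s1 : (Xᵀ * X).IsSymm := by simp [Matrix.IsSymm]
      have s2 : (X * Xᵀ).IsSymm := by simp [Matrix.IsSymm]
      calc (X ^ (2 ^ (k+1+1))).trace = ((X * X) ^ (2 ^ (k+1))).trace := by
            rw [← pow_two, ← pow_mul]; congr 2; ring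
        _ ≤ (((X * X) * (X * X)ᵀ) ^ (2 ^ k)).trace := hP _
        _ = ((X * (X * (Xᵀ * Xᵀ))) ^ (2 ^ k)).trace := by
            rw [transpose_mul]; simp only [mul_assoc]
        _ = (((X * Xᵀ) * (Xᵀ * X)) ^ (2 ^ k)).trace := by
            rw [tr_pow_comm]; simp only [mul_assoc]
        _ ≤ ((X * Xᵀ) ^ (2 ^ k) * (Xᵀ * X) ^ (2 ^ k)).trace := hQ _ _ s2 s1
        _ ≤ _ := tr_mul_le _ _ (s2.pow _) (s1.pow _)
        _ = ((X * Xᵀ) ^ (2 ^ (k+1))).trace := by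
            rw [← pow_add, ← pow_add, ← two_mul, ← pow_succ', tr_pow_comm Xᵀ X]; ring
    · intro A B hA hB
      calc ((A * B) ^ (2 ^ (k+1))).trace ≤ (((A * B) * (A * B)ᵀ) ^ (2 ^ k)).trace := hP _
        _ = ((A * (B * B * A)) ^ (2 ^ k)).trace := by
            rw [transpose_mul, hA.eq, hB.eq]; simp only [mul_assoc]
        _ = (((A ^ 2) * (B ^ 2)) ^ (2 ^ k)).trace := by
            rw [← tr_pow_comm (B ^ 2), tr_pow_comm]; simp only [mul_assoc, pow_two]
        _ ≤ ((A ^ 2) ^ (2 ^ k) * (B ^ 2) ^ (2 ^ k)).trace := hQ _ _ (hA.pow _) (hB.pow _)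
        _ = _ := by rw [← pow_mul, ← pow_mul, ← pow_succ']
end Alg

section An
open scoped Matrix.Norms.L2Operator
open NormedSpace Filter Topology
variable {m : ℕ}

lemma norm_exp_le' {A : Type*} [NormedRing A] [NormedAlgebra ℝ A] [CompleteSpace A] [NormOneClass A]
    (x : A) : ‖exp x‖ ≤ Real.exp ‖x‖ := by
  rw [exp_eq_tsum ℝ, Real.exp_eq_exp_ℝ, exp_eq_tsum ℝ]
  refine (norm_tsum_le_tsum_norm (norm_expSeries_summable' (𝕂 := ℝ) x)).trans ?_
  refine Summable.tsum_le_tsum (fun n => ?_) (norm_expSeries_summable' (𝕂 := ℝ) x)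
    (expSeries_summable' (𝕂 := ℝ) ‖x‖)
  rw [norm_smul, smul_eq_mul]
  have : ‖((n.factorial : ℝ)⁻¹)‖ = (n.factorial : ℝ)⁻¹ := by
    rw [Real.norm_of_nonneg]; positivity
  rw [this]
  gcongr
  exact norm_pow_le _ _

lemma norm_pow_diff {A : Type*} [NormedRing A] [NormOneClass A] (X Y : A) (M : ℝ) (hM : 1 ≤ M)
    (hX : ‖X‖ ≤ M) (hY : ‖Y‖ ≤ M) (n : ℕ) : ‖X ^ n - Y ^ n‖ ≤ n * M ^ n * ‖X - Y‖ := by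
  induction n with
  | zero => simp
  | succ n ih =>
    have e : X ^ (n+1) - Y ^ (n+1) = X ^ n * (X - Y) + (X ^ n - Y ^ n) * Y := by
      rw [pow_succ, pow_succ]; noncomm_ring
    have hM0 : 0 ≤ M := by linarith
    have h1 : ‖X ^ n * (X - Y)‖ ≤ M ^ (n+1) * ‖X - Y‖ := by
      refine (norm_mul_le _ _).trans ?_
      gcongr
      calc ‖X ^ n‖ ≤ ‖X‖ ^ n := norm_pow_le _ _
        _ ≤ M ^ n := by gcongr
        _ ≤ M ^ (n+1) := pow_le_pow_right₀ hM (by omega)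
    have h2 : ‖(X ^ n - Y ^ n) * Y‖ ≤ (n * M ^ n * ‖X - Y‖) * M := by
      refine (norm_mul_le _ _).trans ?_
      gcongr
    rw [e]
    refine (norm_add_le _ _).trans ((add_le_add h1 h2).trans (le_of_eq ?_))
    push_cast; ring

lemma lie_trotter {A : Type*} [NormedRing A] [NormedAlgebra ℝ A] [CompleteSpace A] [NormOneClass A]
    (x y : A) : Tendsto (fun k : ℕ => (exp (((2:ℝ) ^ k)⁻¹ • x) * exp (((2:ℝ) ^ k)⁻¹ • y)) ^ (2 ^ k))
      atTop (𝓝 (exp (x + y))) := by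
  have hd : HasDerivAt (fun t : ℝ => exp (t • (x + y)) - exp (t • x) * exp (t • y)) 0 0 := by
    have h1 := hasDerivAt_exp_smul_const (𝕂 := ℝ) (x + y) 0
    have h2 := hasDerivAt_exp_smul_const (𝕂 := ℝ) x 0
    have h3 := hasDerivAt_exp_smul_const (𝕂 := ℝ) y 0
    have h4 := h1.sub (h2.mul h3)
    have e0 : exp ((0:ℝ) • (x + y)) * (x + y) - (exp ((0:ℝ) • x) * x * exp ((0:ℝ) • y) +
        exp ((0:ℝ) • x) * (exp ((0:ℝ) • y) * y)) = 0 := by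
      simp
    rw [e0] at h4
    exact h4
  have ht : Tendsto (fun k : ℕ => ((2:ℝ) ^ k)⁻¹) atTop (𝓝[≠] 0) := by
    refine tendsto_nhdsWithin_iff.2 ⟨?_, Eventually.of_forall fun k => by simp⟩
    exact tendsto_inv_atTop_zero.comp (tendsto_pow_atTop_atTop_of_one_lt (by norm_num))
  have h0 := (hd.tendsto_slope).comp ht
  have h0' := (h0.norm).const_mul (Real.exp (‖x‖ + ‖y‖))
  simp only [norm_zero, mul_zero] at h0'
  rw [tendsto_iff_norm_sub_tendsto_zero]
  refine squeeze_zero (fun _ => norm_nonneg _) (fun k => ?_) h0'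
  have hp : (0:ℝ) < 2 ^ k := by positivity
  set t : ℝ := ((2:ℝ) ^ k)⁻¹ with htdef
  have htp : 0 < t := by positivity
  have hX : ‖exp (t • (x + y))‖ ≤ Real.exp (t * (‖x‖ + ‖y‖)) := by
    refine (norm_exp_le' _).trans (Real.exp_le_exp.2 ?_)
    rw [norm_smul, Real.norm_of_nonneg htp.le]
    gcongr
    exact norm_add_le _ _
  have hY : ‖exp (t • x) * exp (t • y)‖ ≤ Real.exp (t * (‖x‖ + ‖y‖)) := by
    refine (norm_mul_le _ _).trans ?_
    rw [mul_add, Real.exp_add]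
    refine mul_le_mul ?_ ?_ (norm_nonneg _) (Real.exp_pos _).le
    · refine (norm_exp_le' _).trans (Real.exp_le_exp.2 ?_)
      rw [norm_smul, Real.norm_of_nonneg htp.le]
    · refine (norm_exp_le' _).trans (Real.exp_le_exp.2 ?_)
      rw [norm_smul, Real.norm_of_nonneg htp.le]
  have hM : 1 ≤ Real.exp (t * (‖x‖ + ‖y‖)) := Real.one_le_exp (by positivity)
  have hpow : exp (x + y) = exp (t • (x + y)) ^ (2 ^ k) := by
    let _ : NormedAlgebra ℚ A := NormedAlgebra.restrictScalars ℚ ℝ A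
    rw [← NormedSpace.exp_nsmul, ← Nat.cast_smul_eq_nsmul ℝ, smul_smul, htdef]
    push_cast
    rw [mul_inv_cancel₀ hp.ne', one_smul]
  have hMp : Real.exp (t * (‖x‖ + ‖y‖)) ^ (2 ^ k) = Real.exp (‖x‖ + ‖y‖) := by
    rw [← Real.exp_nat_mul, htdef]
    push_cast
    rw [← mul_assoc, mul_inv_cancel₀ hp.ne', one_mul]
  have := norm_pow_diff _ _ _ hM hX hY (2 ^ k)
  rw [norm_sub_rev, hpow]
  refine this.trans (le_of_eq ?_)
  rw [hMp]
  simp only [Function.comp, slope_def_module, ← htdef]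
  simp only [sub_zero, zero_smul, exp_zero, mul_one, sub_self]
  rw [norm_smul, htdef, inv_inv, Real.norm_of_nonneg hp.le]
  push_cast
  ring

lemma golden_thompson [NeZero m] (A B : Matrix (Fin m) (Fin m) ℝ) (hA : A.IsSymm) (hB : B.IsSymm) :
    (exp (A + B)).trace ≤ (exp A * exp B).trace := by
  have h := lie_trotter A B
  have hc : Continuous (fun M : Matrix (Fin m) (Fin m) ℝ => M.trace) :=
    Continuous.matrix_trace continuous_id
  have h2 := (hc.tendsto _).comp h
  refine le_of_tendsto h2 (Eventually.of_forall fun k => ?_)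
  simp only [Function.comp]
  have hA' : (exp (((2:ℝ) ^ k)⁻¹ • A)).IsSymm := IsSymm.exp (hA.smul _)
  have hB' : (exp (((2:ℝ) ^ k)⁻¹ • B)).IsSymm := IsSymm.exp (hB.smul _)
  refine ((main_ind k).2 _ _ hA' hB').trans (le_of_eq ?_)
  have hp : ∀ x : Matrix (Fin m) (Fin m) ℝ, exp (((2:ℝ) ^ k)⁻¹ • x) ^ (2 ^ k) = exp x := by
    intro x
    rw [← Matrix.exp_nsmul, ← Nat.cast_smul_eq_nsmul ℝ, smul_smul]
    push_cast
    rw [mul_inv_cancel₀ (by positivity), one_smul]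
  rw [hp, hp]

lemma spec (A : Matrix (Fin m) (Fin m) ℝ) (hA : A.IsSymm) :
    ∃ (V : Matrix (Fin m) (Fin m) ℝ) (d : Fin m → ℝ), Vᵀ * V = 1 ∧ V * Vᵀ = 1 ∧
      A = V * diagonal d * Vᵀ ∧ exp A = V * diagonal (fun i => Real.exp (d i)) * Vᵀ ∧
      ‖A‖ = ‖d‖ := by
  have hH : A.IsHermitian := by rwa [IsHermitian, conjTranspose_eq_transpose_of_trivial]
  have h1 : (hH.eigenvectorUnitary : Matrix (Fin m) (Fin m) ℝ)ᵀ * hH.eigenvectorUnitary = 1 := by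
    have := Unitary.coe_star_mul_self hH.eigenvectorUnitary
    rwa [star_eq_conjTranspose, conjTranspose_eq_transpose_of_trivial] at this
  have h2 : (hH.eigenvectorUnitary : Matrix (Fin m) (Fin m) ℝ) *
      (hH.eigenvectorUnitary : Matrix (Fin m) (Fin m) ℝ)ᵀ = 1 := by
    have := Unitary.coe_mul_star_self hH.eigenvectorUnitary
    rwa [Unitary.coe_star, star_eq_conjTranspose, conjTranspose_eq_transpose_of_trivial] at this
  have h3 := hH.spectral_theorem
  rw [Unitary.conjStarAlgAut_apply, star_eq_conjTranspose,
    conjTranspose_eq_transpose_of_trivial] at h3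
  have hun := hH.eigenvectorUnitary.2
  set V : Matrix (Fin m) (Fin m) ℝ := (hH.eigenvectorUnitary : Matrix (Fin m) (Fin m) ℝ) with hV
  have h3' : A = V * diagonal hH.eigenvalues * Vᵀ := h3
  refine ⟨V, hH.eigenvalues, h1, h2, h3', ?_, ?_⟩
  · have hinv : V⁻¹ = Vᵀ := inv_eq_left_inv h1
    have hu : IsUnit V := IsUnit.of_mul_eq_one _ h2
    conv_lhs => rw [h3', ← hinv, Matrix.exp_conj V _ hu, exp_diagonal, hinv]
    congr 3
    ext i
    rw [Pi.coe_exp, Real.exp_eq_exp_ℝ]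
  · conv_lhs => rw [h3']
    have : Vᵀ = star V := by rw [star_eq_conjTranspose, conjTranspose_eq_transpose_of_trivial]
    rw [this, CStarRing.norm_mul_mem_unitary _ (Unitary.star_mem hun),
      CStarRing.norm_mem_unitary_mul _ hun, l2_opNorm_diagonal]

lemma exp_norm_le [NeZero m] (A : Matrix (Fin m) (Fin m) ℝ) (hA : A.IsSymm) :
    Real.exp ‖A‖ ≤ (exp A).trace + (exp (-A)).trace := by
  obtain ⟨V, d, h1, h2, h3, h4, h5⟩ := spec A hA
  have h4' : exp (-A) = V * diagonal (fun i => Real.exp (-d i)) * Vᵀ := by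
    have hinv : V⁻¹ = Vᵀ := inv_eq_left_inv h1
    have hu : IsUnit V := IsUnit.of_mul_eq_one _ h2
    have : -A = V * diagonal (fun i => - d i) * Vᵀ := by
      
      rw [h3, show diagonal (fun i => - d i) = - diagonal d from (diagonal_neg d).symm, mul_neg, neg_mul]
    rw [this, ← hinv, Matrix.exp_conj V _ hu, exp_diagonal, hinv]
    congr 3
    ext i
    rw [Pi.coe_exp, Real.exp_eq_exp_ℝ]
  have tr : ∀ e : Fin m → ℝ, (V * diagonal e * Vᵀ).trace = ∑ i, e i := by
    intro e
    rw [trace_mul_comm, ← mul_assoc, h1, one_mul, trace_diagonal]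
  rw [h4, h4', tr, tr, ← Finset.sum_add_distrib, h5]
  obtain ⟨i, hi⟩ : ∃ i, ‖d‖ = ‖d i‖ := by
    obtain ⟨i, -, hi⟩ := Finset.exists_mem_eq_sup Finset.univ Finset.univ_nonempty (fun i => ‖d i‖₊)
    refine ⟨i, ?_⟩
    rw [Pi.norm_def, hi]; rfl
  rw [hi]
  refine le_trans ?_ (Finset.single_le_sum (f := fun i => Real.exp (d i) + Real.exp (-d i))
    (fun i _ => by positivity) (Finset.mem_univ i))
  rw [Real.norm_eq_abs]
  rcases abs_cases (d i) with ⟨h, _⟩ | ⟨h, _⟩ <;> rw [h]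
  · linarith [Real.exp_pos (-d i)]
  · linarith [Real.exp_pos (d i)]

lemma exp_le_quad (X : Matrix (Fin m) (Fin m) ℝ) (hX : X.IsSymm) (h : ‖X‖ ≤ 1) :
    (1 + X + X * X - exp X).PosSemidef := by
  obtain ⟨V, d, h1, h2, h3, h4, h5⟩ := spec X hX
  have e : 1 + X + X * X - exp X =
      V * diagonal (fun i => 1 + d i + d i * d i - Real.exp (d i)) * Vᵀ := by
    have hd : diagonal (fun i => 1 + d i + d i * d i - Real.exp (d i)) =
        1 + diagonal d + diagonal d * diagonal d - diagonal (fun i => Real.exp (d i)) := by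
      rw [← diagonal_one, diagonal_mul_diagonal, diagonal_add, diagonal_add, diagonal_sub]
    have hxx : X * X = V * (diagonal d * diagonal d) * Vᵀ := by
      calc X * X = (V * diagonal d * Vᵀ) * (V * diagonal d * Vᵀ) := by rw [← h3]
        _ = V * diagonal d * (Vᵀ * V) * diagonal d * Vᵀ := by simp only [mul_assoc]
        _ = _ := by rw [h1]; simp only [mul_assoc, mul_one]
    rw [hd, hxx, h4, mul_sub, mul_add, mul_add, sub_mul, add_mul, add_mul, mul_one, h2, ← h3]
  rw [e, ← conjTranspose_eq_transpose_of_trivial]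
  apply PosSemidef.mul_mul_conjTranspose_same
  apply PosSemidef.diagonal
  intro i
  have hi : |d i| ≤ 1 := by
    have := norm_le_pi_norm d i
    rw [Real.norm_eq_abs] at this
    linarith
  have := (abs_le.1 (Real.abs_exp_sub_one_sub_id_le hi)).2
  simp only [Pi.zero_apply]
  nlinarith

lemma tr_exp_mul_nonneg (H Q : Matrix (Fin m) (Fin m) ℝ) (hH : H.IsSymm) (hQ : Q.PosSemidef) :
    0 ≤ (exp H * Q).trace := by
  have hR : (exp ((1/2:ℝ) • H)).IsSymm := IsSymm.exp (hH.smul _)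
  have e : exp H = exp ((1/2:ℝ) • H) * exp ((1/2:ℝ) • H) := by
    rw [← Matrix.exp_add_of_commute _ _ (Commute.refl _), ← add_smul]; norm_num
  have := (hQ.mul_mul_conjTranspose_same (exp ((1/2:ℝ) • H))).trace_nonneg
  rw [conjTranspose_eq_transpose_of_trivial, hR.eq] at this
  rw [e, mul_assoc, trace_mul_comm]
  exact this

lemma norm_sub_psd (V : Matrix (Fin m) (Fin m) ℝ) (hV : V.IsSymm) :
    (‖V‖ • (1 : Matrix (Fin m) (Fin m) ℝ) - V).PosSemidef := by
  obtain ⟨W, d, h1, h2, h3, h4, h5⟩ := spec V hV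
  have e : ‖V‖ • (1 : Matrix (Fin m) (Fin m) ℝ) - V = W * diagonal (fun i => ‖V‖ - d i) * Wᵀ := by
    have : diagonal (fun i => ‖V‖ - d i) = ‖V‖ • 1 - diagonal d := by
      rw [smul_one_eq_diagonal, diagonal_sub]
    rw [this, mul_sub, sub_mul, ← h3]; simp [h2]
  rw [e, ← conjTranspose_eq_transpose_of_trivial]
  apply PosSemidef.mul_mul_conjTranspose_same
  apply PosSemidef.diagonal
  intro i
  have := norm_le_pi_norm d i
  rw [Real.norm_eq_abs] at this
  simp only [Pi.zero_apply]
  linarith [le_abs_self (d i)]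

lemma integrable_gen {Ω : Type*} [MeasurableSpace Ω] (ν : Measure Ω) [IsFiniteMeasure ν]
    (F : Ω → Fin m → Fin m → ℝ) (hF : Measurable F) (R : ℝ) (hR : ∀ ω, ‖of (F ω)‖ ≤ R)
    (g : Matrix (Fin m) (Fin m) ℝ → ℝ) (hg : Continuous g) :
    Integrable (fun ω => g (of (F ω))) ν := by
  have : ProperSpace (Matrix (Fin m) (Fin m) ℝ) := FiniteDimensional.proper ℝ _
  obtain ⟨C, hC⟩ := (isCompact_closedBall (0 : Matrix (Fin m) (Fin m) ℝ) R).exists_bound_of_continuousOn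
    hg.continuousOn
  have hof : Continuous (fun f : Fin m → Fin m → ℝ => g (of f)) := hg.comp continuous_id
  refine Integrable.of_bound (C := C) (hof.measurable.comp hF).aestronglyMeasurable
    (Eventually.of_forall fun ω => hC _ ?_)
  simpa using hR ω

lemma cont_tr_exp (H : Matrix (Fin m) (Fin m) ℝ) (θ : ℝ) :
    Continuous (fun X : Matrix (Fin m) (Fin m) ℝ => (exp (H + θ • X)).trace) := by
  have h : Continuous (exp : Matrix (Fin m) (Fin m) ℝ → Matrix (Fin m) (Fin m) ℝ) := by
    let _ : NormedAlgebra ℚ (Matrix (Fin m) (Fin m) ℝ) := NormedAlgebra.restrictScalars ℚ ℝ _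
    exact exp_continuous
  exact Continuous.matrix_trace (h.comp (by fun_prop))

lemma integral_tr_mul {Ω : Type*} [MeasurableSpace Ω] (ν : Measure Ω)
    (P : Matrix (Fin m) (Fin m) ℝ) (G : Ω → Matrix (Fin m) (Fin m) ℝ)
    (hG : ∀ u v, Integrable (fun ω => G ω u v) ν) :
    ∫ ω, (P * G ω).trace ∂ν = (P * of fun u v => ∫ ω, G ω u v ∂ν).trace := by
  simp only [Matrix.trace, diag_apply, mul_apply, of_apply]
  have hi : ∀ i j, Integrable (fun ω => P i j * G ω j i) ν := fun i j => (hG j i).const_mul _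
  rw [integral_finsetSum _ (fun i _ => integrable_finsetSum _ fun j _ => hi i j)]
  refine Finset.sum_congr rfl fun i _ => ?_
  rw [integral_finsetSum _ (fun j _ => hi i j)]
  refine Finset.sum_congr rfl fun j _ => ?_
  rw [integral_const_mul]

lemma int_lin {Ω : Type*} [MeasurableSpace Ω] (ν : Measure Ω) [IsProbabilityMeasure ν]
    (f g : Ω → ℝ) (hf : Integrable f ν) (hg : Integrable g ν) (c a b : ℝ) :
    ∫ ω, (c + a * f ω + b * g ω) ∂ν = c + a * ∫ ω, f ω ∂ν + b * ∫ ω, g ω ∂ν := by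
  have h1 : Integrable (fun ω => a * f ω) ν := hf.const_mul a
  have h2 : Integrable (fun ω => b * g ω) ν := hg.const_mul b
  have h3 : Integrable (fun ω => c + a * f ω) ν := (integrable_const c).add h1
  rw [integral_add h3 h2, integral_add (integrable_const c) h1, integral_const_mul,
    integral_const_mul]
  simp

lemma one_step [NeZero m] {Ω : Type*} [MeasurableSpace Ω] (μ : Measure Ω) [IsProbabilityMeasure μ]
    (T : Ω → Fin m → Fin m → ℝ) (hT : Measurable T) (U : ℝ)
    (hs : ∀ f, (of (T f)).IsSymm) (hU : ∀ f, ‖of (T f)‖ ≤ U)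
    (h0 : ∀ u v, ∫ f, T f u v ∂μ = 0) (θ : ℝ) (hθ : |θ| * U ≤ 1)
    (H : Matrix (Fin m) (Fin m) ℝ) (hH : H.IsSymm) :
    ∫ f, (exp (H + θ • of (T f))).trace ∂μ ≤
      (1 + θ ^ 2 * ‖of fun u v => ∫ f, (of (T f) * of (T f)) u v ∂μ‖) * (exp H).trace := by
  set V : Matrix (Fin m) (Fin m) ℝ := of fun u v => ∫ f, (of (T f) * of (T f)) u v ∂μ with hV
  have hVs : V.IsSymm := by
    ext u v
    simp only [hV, transpose_apply, of_apply]
    congr 1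
    ext f
    have : (of (T f) * of (T f)).IsSymm := by
      rw [Matrix.IsSymm, transpose_mul, (hs f).eq]
    exact this.apply _ _
  have i1 : ∀ u v, Integrable (fun f => (of (T f)) u v) μ := fun u v =>
    integrable_gen μ T hT U hU (fun X => X u v) (by fun_prop)
  have i2 : ∀ u v, Integrable (fun f => (of (T f) * of (T f)) u v) μ := fun u v =>
    integrable_gen μ T hT U hU (fun X => (X * X) u v) (by fun_prop)
  have j1 : Integrable (fun f => (exp H * of (T f)).trace) μ :=
    integrable_gen μ T hT U hU (fun X => (exp H * X).trace)
      (Continuous.matrix_trace (by fun_prop))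
  have j2 : Integrable (fun f => (exp H * (of (T f) * of (T f))).trace) μ :=
    integrable_gen μ T hT U hU (fun X => (exp H * (X * X)).trace)
      (Continuous.matrix_trace (by fun_prop))
  have key : ∀ f, (exp (H + θ • of (T f))).trace ≤ (exp H).trace +
      θ * (exp H * of (T f)).trace + θ ^ 2 * (exp H * (of (T f) * of (T f))).trace := by
    intro f
    have hX : (θ • of (T f)).IsSymm := (hs f).smul θ
    have hn : ‖θ • of (T f)‖ ≤ 1 := by
      rw [norm_smul, Real.norm_eq_abs]
      exact (mul_le_mul_of_nonneg_left (hU f) (abs_nonneg _)).trans hθ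
    have h1 := golden_thompson H _ hH hX
    have h2 := tr_exp_mul_nonneg H _ hH (exp_le_quad _ hX hn)
    rw [mul_sub, mul_add, mul_add, trace_sub, trace_add, trace_add, mul_one, smul_mul_smul_comm,
      mul_smul_comm, mul_smul_comm, trace_smul, trace_smul, smul_eq_mul, smul_eq_mul,
      ← pow_two] at h2
    linarith
  have e1 : ∫ f, (exp H * of (T f)).trace ∂μ = 0 := by
    rw [integral_tr_mul μ _ _ i1]
    have : (of fun u v => ∫ ω, (of (T ω)) u v ∂μ) = (0 : Matrix (Fin m) (Fin m) ℝ) := by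
      ext u v; exact h0 u v
    rw [this]; simp
  have e2 : ∫ f, (exp H * (of (T f) * of (T f))).trace ∂μ = (exp H * V).trace :=
    integral_tr_mul μ _ _ i2
  have h3 : (exp H * V).trace ≤ ‖V‖ * (exp H).trace := by
    have := tr_exp_mul_nonneg H _ hH (norm_sub_psd V hVs)
    rw [mul_sub, trace_sub, mul_smul_comm, trace_smul, mul_one, smul_eq_mul] at this
    linarith
  calc _ ≤ ∫ f, ((exp H).trace + θ * (exp H * of (T f)).trace +
        θ ^ 2 * (exp H * (of (T f) * of (T f))).trace) ∂μ :=
        integral_mono (integrable_gen μ T hT U hU _ (cont_tr_exp H θ))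
          (((integrable_const _).add (j1.const_mul _)).add (j2.const_mul _)) key
    _ = (exp H).trace + θ ^ 2 * (exp H * V).trace := by
        rw [int_lin μ _ _ j1 j2, e1, e2]
        simp
    _ ≤ _ := by nlinarith [sq_nonneg θ]

lemma sum_bound {n : ℕ} {Ω : Type*} (T : Ω → Fin m → Fin m → ℝ) (U : ℝ)
    (hU : ∀ f, ‖of (T f)‖ ≤ U) (ω : Fin n → Ω) : ‖of (∑ j, T (ω j))‖ ≤ n * U := by
  have : of (∑ j, T (ω j)) = ∑ j, of (T (ω j)) := by
    ext u v; simp [Matrix.sum_apply]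
  rw [this]
  refine (norm_sum_le _ _).trans ((Finset.sum_le_sum fun j _ => hU _).trans (by simp))

lemma sum_symm {n : ℕ} {Ω : Type*} (T : Ω → Fin m → Fin m → ℝ)
    (hs : ∀ f, (of (T f)).IsSymm) (ω : Fin n → Ω) : (of (∑ j, T (ω j))).IsSymm := by
  ext u v
  simp only [transpose_apply, of_apply, Finset.sum_apply]
  exact Finset.sum_congr rfl fun j _ => (hs (ω j)).apply _ _

lemma sum_meas {n : ℕ} {Ω : Type*} [MeasurableSpace Ω] (T : Ω → Fin m → Fin m → ℝ)
    (hT : Measurable T) : Measurable (fun ω : Fin n → Ω => ∑ j, T (ω j)) :=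
  Finset.measurable_sum _ fun j _ => hT.comp (measurable_pi_apply j)

lemma n_step [NeZero m] {Ω : Type*} [MeasurableSpace Ω] (μ : Measure Ω) [IsProbabilityMeasure μ]
    (T : Ω → Fin m → Fin m → ℝ) (hT : Measurable T) (U : ℝ)
    (hs : ∀ f, (of (T f)).IsSymm) (hU : ∀ f, ‖of (T f)‖ ≤ U)
    (h0 : ∀ u v, ∫ f, T f u v ∂μ = 0) (θ : ℝ) (hθ : |θ| * U ≤ 1) (n : ℕ) :
    ∫ ω : Fin n → Ω, (exp (θ • of (∑ j, T (ω j)))).trace ∂(Measure.pi fun _ => μ) ≤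
      (1 + θ ^ 2 * ‖of fun u v => ∫ f, (of (T f) * of (T f)) u v ∂μ‖) ^ n * m := by
  set c := 1 + θ ^ 2 * ‖of fun u v => ∫ f, (of (T f) * of (T f)) u v ∂μ‖ with hc
  have hc0 : 0 ≤ c := by positivity
  have hi : ∀ n : ℕ, Integrable (fun ω : Fin n → Ω => (exp (θ • of (∑ j, T (ω j)))).trace)
      (Measure.pi fun _ => μ) := fun n => by
    have := integrable_gen (Measure.pi fun _ : Fin n => μ) (fun ω => ∑ j, T (ω j)) (sum_meas T hT)
      (n * U) (sum_bound T U hU) _ (cont_tr_exp 0 θ)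
    simpa only [zero_add] using this
  induction n with
  | zero => simp
  | succ n ih =>
    have mp := (measurePreserving_piFinSuccAbove (fun _ : Fin (n+1) => μ) 0).symm
    have hint := (mp.integrable_comp_emb (MeasurableEquiv.measurableEmbedding _)).2 (hi (n+1))
    rw [← mp.integral_comp (MeasurableEquiv.measurableEmbedding _)]
    have e : ∀ p : Ω × (Fin n → Ω), (exp (θ • of (∑ j,
        T ((MeasurableEquiv.piFinSuccAbove (fun _ : Fin (n+1) => Ω) 0).symm p j)))).trace =
        (exp (θ • of (∑ j, T (p.2 j)) + θ • of (T p.1))).trace := by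
      intro p
      rw [← smul_add, add_comm (of _)]
      congr 3
      rw [Fin.sum_univ_succ]
      rfl
    have hint' : Integrable (fun p : Ω × (Fin n → Ω) =>
        (exp (θ • of (∑ j, T (p.2 j)) + θ • of (T p.1))).trace)
        (μ.prod (Measure.pi fun _ => μ)) := by
      refine hint.congr (Eventually.of_forall fun p => ?_)
      exact e p
    have e' := integral_congr_ae (μ := μ.prod (Measure.pi fun _ : Fin n => μ))
      (Eventually.of_forall e)
    refine (le_of_eq e').trans ?_
    rw [integral_prod_symm _ hint']
    calc _ ≤ ∫ y : Fin n → Ω, c * (exp (θ • of (∑ j, T (y j)))).trace ∂(Measure.pi fun _ => μ) := by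
          refine integral_mono hint'.integral_prod_right ((hi n).const_mul c) fun y => ?_
          exact one_step μ T hT U hs hU h0 θ hθ _ ((sum_symm T hs y).smul θ)
      _ ≤ c ^ (n+1) * m := by
          rw [integral_const_mul, pow_succ', mul_assoc]
          gcongr

lemma norm_bound [NeZero m] {Ω : Type*} [MeasurableSpace Ω] (μ : Measure Ω)
    [IsProbabilityMeasure μ]
    (T : Ω → Fin m → Fin m → ℝ) (hT : Measurable T) (U : ℝ)
    (hs : ∀ f, (of (T f)).IsSymm) (hU : ∀ f, ‖of (T f)‖ ≤ U)
    (h0 : ∀ u v, ∫ f, T f u v ∂μ = 0) (θ : ℝ) (hθ0 : 0 < θ) (hθ : θ * U ≤ 1) (n : ℕ) :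
    θ * ∫ ω : Fin n → Ω, ‖of (∑ j, T (ω j))‖ ∂(Measure.pi fun _ => μ) ≤
      Real.log (2 * m) + n * (θ ^ 2 * ‖of fun u v => ∫ f, (of (T f) * of (T f)) u v ∂μ‖) := by
  set s := ‖of fun u v => ∫ f, (of (T f) * of (T f)) u v ∂μ‖ with hsd
  have hs0 : 0 ≤ s := norm_nonneg _
  have hm : (0:ℝ) < m := by exact_mod_cast Nat.pos_of_ne_zero (NeZero.ne m)
  set K : ℝ := (1 + θ ^ 2 * s) ^ n * (2 * m) with hK
  have hKp : 0 < K := by positivity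
  have ha : |θ| * U ≤ 1 := by rwa [abs_of_pos hθ0]
  have ha' : |-θ| * U ≤ 1 := by rwa [abs_neg]
  have A1 := n_step μ T hT U hs hU h0 θ ha n
  have A2 := n_step μ T hT U hs hU h0 (-θ) ha' n
  rw [neg_sq] at A2
  have gi := fun g hg => integrable_gen (Measure.pi fun _ : Fin n => μ) (fun ω => ∑ j, T (ω j))
    (sum_meas T hT) (n * U) (sum_bound T U hU) g hg
  have I1 : Integrable (fun ω : Fin n → Ω => (exp (θ • of (∑ j, T (ω j)))).trace)
      (Measure.pi fun _ => μ) := by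
    simpa only [zero_add] using gi _ (cont_tr_exp 0 θ)
  have I2 : Integrable (fun ω : Fin n → Ω => (exp ((-θ) • of (∑ j, T (ω j)))).trace)
      (Measure.pi fun _ => μ) := by
    simpa only [zero_add] using gi _ (cont_tr_exp 0 (-θ))
  have I3 : Integrable (fun ω : Fin n → Ω => ‖of (∑ j, T (ω j))‖)
      (Measure.pi fun _ => μ) := gi _ continuous_norm
  have key : ∀ ω : Fin n → Ω, θ * ‖of (∑ j, T (ω j))‖ ≤ (Real.log K - 1) +
      K⁻¹ * ((exp (θ • of (∑ j, T (ω j)))).trace + (exp ((-θ) • of (∑ j, T (ω j)))).trace) := by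
    intro ω
    have h1 := exp_norm_le (θ • of (∑ j, T (ω j))) ((sum_symm T hs ω).smul θ)
    rw [norm_smul, Real.norm_of_nonneg hθ0.le, ← neg_smul] at h1
    have h2 := Real.add_one_le_exp (θ * ‖of (∑ j, T (ω j))‖ - Real.log K)
    rw [Real.exp_sub, Real.exp_log hKp, div_eq_inv_mul] at h2
    have h3 := mul_le_mul_of_nonneg_left h1 (inv_nonneg.2 hKp.le)
    linarith
  have h4 := integral_mono (I3.const_mul θ)
    ((integrable_const (Real.log K - 1)).add ((I1.add I2).const_mul K⁻¹)) key
  rw [integral_const_mul] at h4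
  have e4 := int_lin (Measure.pi fun _ : Fin n => μ) _ _ I1 I2 (Real.log K - 1) K⁻¹ K⁻¹
  have h4 := h4.trans (le_of_eq ((integral_congr_ae (Eventually.of_forall fun ω => by
    simp only [Pi.add_apply]; ring)).trans e4))
  have h5 : K⁻¹ * (∫ ω : Fin n → Ω, (exp (θ • of (∑ j, T (ω j)))).trace ∂(Measure.pi fun _ => μ) +
      ∫ ω : Fin n → Ω, (exp ((-θ) • of (∑ j, T (ω j)))).trace ∂(Measure.pi fun _ => μ)) ≤ 1 := by
    rw [inv_mul_le_one₀ hKp, hK]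
    linarith
  have h6 : Real.log K ≤ Real.log (2 * m) + n * (θ ^ 2 * s) := by
    rw [hK, Real.log_mul (by positivity) (by positivity), Real.log_pow]
    have := Real.log_le_sub_one_of_pos (show 0 < 1 + θ ^ 2 * s by positivity)
    have : (n:ℝ) * Real.log (1 + θ ^ 2 * s) ≤ n * (θ ^ 2 * s) := by
      gcongr; linarith
    linarith
  linarith

lemma optimize (n : ℕ) (hn : 1 ≤ n) (U L s I : ℝ) (hU : 0 < U) (hL : 0 < L) (hs : 0 ≤ s)
    (h : ∀ θ : ℝ, 0 < θ → θ * U ≤ 1 → θ * I ≤ L + n * (θ ^ 2 * s)) :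
    (n:ℝ)⁻¹ * I ≤ 4 * max (Real.sqrt s * Real.sqrt (L / n)) (U * L / n) := by
  have hn0 : (0:ℝ) < n := by exact_mod_cast hn
  rcases le_or_gt (n * s) (U ^ 2 * L) with hc | hc
  · have h1 := h U⁻¹ (by positivity) (by rw [inv_mul_cancel₀ hU.ne'])
    have h2 : I ≤ 2 * (U * L) := by
      have h3 := mul_le_mul_of_nonneg_left h1 hU.le
      rw [← mul_assoc, mul_inv_cancel₀ hU.ne', one_mul] at h3
      have : U * (L + n * (U⁻¹ ^ 2 * s)) = U * L + U⁻¹ * (n * s) := by field_simp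
      rw [this] at h3
      have h4 : U⁻¹ * (n * s) ≤ U⁻¹ * (U ^ 2 * L) := by gcongr
      have h5 : U⁻¹ * (U ^ 2 * L) = U * L := by field_simp
      linarith
    have h6 : (n:ℝ)⁻¹ * I ≤ (n:ℝ)⁻¹ * (2 * (U * L)) := by gcongr
    have h7 : (n:ℝ)⁻¹ * (2 * (U * L)) = 2 * (U * L / n) := by field_simp
    have h8 := le_max_right (Real.sqrt s * Real.sqrt (L / n)) (U * L / n)
    have h9 : 0 ≤ U * L / n := by positivity
    linarith
  · have hsp : 0 < s := by
      rcases hs.eq_or_lt with h | h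
      · rw [← h, mul_zero] at hc
        have : 0 < U ^ 2 * L := by positivity
        linarith
      · exact h
    set a := Real.sqrt s with ha
    set b := Real.sqrt (L / n) with hb
    have hap : 0 < a := Real.sqrt_pos.2 hsp
    have hbp : 0 < b := Real.sqrt_pos.2 (by positivity)
    have hsa : s = a ^ 2 := (Real.sq_sqrt hs).symm
    have hLb : L = n * b ^ 2 := by
      rw [hb, Real.sq_sqrt (by positivity)]; field_simp
    have hU1 : b / a * U ≤ 1 := by
      rw [div_mul_eq_mul_div, div_le_one hap]
      rw [hsa, hLb] at hc
      have : (b * U) ^ 2 ≤ a ^ 2 := by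
        have : (n:ℝ) * (b * U) ^ 2 ≤ n * a ^ 2 := by nlinarith
        exact le_of_mul_le_mul_left this hn0
      exact (sq_le_sq₀ (by positivity) hap.le).1 this
    have h1 := h (b / a) (by positivity) hU1
    rw [hsa, hLb] at h1
    have h2 : (n:ℝ) * b ^ 2 + n * ((b / a) ^ 2 * a ^ 2) = (b / a) * (n * (2 * (a * b))) := by
      field_simp; ring
    rw [h2] at h1
    have h3 := le_of_mul_le_mul_left h1 (by positivity)
    have h6 : (n:ℝ)⁻¹ * I ≤ (n:ℝ)⁻¹ * (n * (2 * (a * b))) := by gcongr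
    rw [← mul_assoc, inv_mul_cancel₀ hn0.ne', one_mul] at h6
    have h8 := le_max_left (a * b) (U * L / n)
    have h9 : 0 ≤ a * b := by positivity
    linarith

lemma final [NeZero m] (n : ℕ) (U : ℝ) (μ : Measure (Fin m → Fin m → ℝ)) (hn : 1 ≤ n) (hU : 0 < U)
    (hμ : IsProbabilityMeasure μ) (hsym : ∀ᵐ f ∂μ, (Matrix.of f).IsSymm)
    (hbd : ∀ᵐ f ∂μ, ‖Matrix.of f‖ ≤ U) (h0 : ∀ u v : Fin m, (∫ f, f u v ∂μ) = 0) :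
    (∫ ω : Fin n → (Fin m → Fin m → ℝ),
          ‖((n : ℝ)⁻¹ • ∑ j, Matrix.of (ω j))‖ ∂(Measure.pi fun _ => μ)) ≤
        4 * max
          (Real.sqrt ‖Matrix.of fun u v =>
              ∫ f, (Matrix.of f * Matrix.of f) u v ∂μ‖ *
            Real.sqrt (Real.log (2 * m) / n))
          (U * Real.log (2 * m) / n) := by
  classical
  let G : Set (Fin m → Fin m → ℝ) := {f | (of f).IsSymm ∧ ‖of f‖ ≤ U}
  have hcof : Continuous (fun f : Fin m → Fin m → ℝ => (of f : Matrix (Fin m) (Fin m) ℝ)) :=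
    continuous_id
  have hG : MeasurableSet G := by
    apply IsClosed.measurableSet
    apply IsClosed.inter
    · exact isClosed_eq (Continuous.matrix_transpose hcof) hcof
    · exact isClosed_le (continuous_norm.comp hcof) continuous_const
  let T : (Fin m → Fin m → ℝ) → Fin m → Fin m → ℝ := fun f => if f ∈ G then f else 0
  have hT : Measurable T := Measurable.ite hG measurable_id measurable_const
  have hTs : ∀ f, (of (T f)).IsSymm := by
    intro f
    by_cases h : f ∈ G
    · simp only [T, if_pos h]; exact h.1
    · simp only [T, if_neg h]; exact isSymm_zero
  have hTU : ∀ f, ‖of (T f)‖ ≤ U := by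
    intro f
    by_cases h : f ∈ G
    · simp only [T, if_pos h]; exact h.2
    · simp only [T, if_neg h]
      have : (of (0 : Fin m → Fin m → ℝ)) = (0 : Matrix (Fin m) (Fin m) ℝ) := rfl
      rw [this, norm_zero]; exact hU.le
  have hae : ∀ᵐ f ∂μ, T f = f := by
    filter_upwards [hsym, hbd] with f h1 h2
    exact if_pos ⟨h1, h2⟩
  have hT0 : ∀ u v, ∫ f, T f u v ∂μ = 0 := by
    intro u v
    rw [← h0 u v]
    exact integral_congr_ae (hae.mono fun f hf => by simp only [hf])
  have hV : (of fun u v => ∫ f, (of (T f) * of (T f)) u v ∂μ) =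
      (of fun u v => ∫ f, (of f * of f) u v ∂μ : Matrix (Fin m) (Fin m) ℝ) := by
    ext u v
    exact integral_congr_ae (hae.mono fun f hf => by simp only [hf])
  have hae' : ∀ᵐ ω ∂(Measure.pi fun _ : Fin n => μ), ∀ j, T (ω j) = ω j :=
    ae_all_iff.2 fun j => (Measure.tendsto_eval_ae_ae (μ := fun _ : Fin n => μ) (i := j)).eventually hae
  have hI : (∫ ω : Fin n → (Fin m → Fin m → ℝ),
      ‖((n : ℝ)⁻¹ • ∑ j, Matrix.of (ω j))‖ ∂(Measure.pi fun _ => μ)) =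
      (n:ℝ)⁻¹ * ∫ ω : Fin n → (Fin m → Fin m → ℝ), ‖of (∑ j, T (ω j))‖ ∂(Measure.pi fun _ => μ) := by
    rw [← integral_const_mul]
    refine integral_congr_ae (hae'.mono fun ω hω => ?_)
    have : of (∑ j, T (ω j)) = ∑ j, of (ω j) := by
      ext u v; simp [Matrix.sum_apply, hω]
    simp only [this]
    rw [norm_smul, Real.norm_of_nonneg (by positivity)]
  rw [hI]
  have hm : (1:ℝ) ≤ m := by exact_mod_cast Nat.pos_of_ne_zero (NeZero.ne m)
  refine optimize n hn U _ _ _ hU (Real.log_pos (by linarith)) (norm_nonneg _) fun θ hθ hθU => ?_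
  rw [← hV]
  exact norm_bound μ T hT U hTs hTU hT0 θ hθ hθU n
end An
end MB

theorem matrix_bernstein_expectation :
    ∀ (m n : ℕ) (U : ℝ) (μ : Measure (Fin m → Fin m → ℝ)),
      1 ≤ m → 1 ≤ n → 0 < U →
      IsProbabilityMeasure μ →
      (∀ᵐ f ∂μ, (Matrix.of f).IsSymm) →
      (∀ᵐ f ∂μ, opNorm (Matrix.of f) ≤ U) →
      (∀ u v : Fin m, (∫ f, f u v ∂μ) = 0) →
      (∫ ω : Fin n → (Fin m → Fin m → ℝ),
          opNorm ((n : ℝ)⁻¹ • ∑ j, Matrix.of (ω j)) ∂(Measure.pi fun _ => μ)) ≤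
        4 * max
          (Real.sqrt (opNorm (Matrix.of fun u v =>
              ∫ f, (Matrix.of f * Matrix.of f) u v ∂μ)) *
            Real.sqrt (Real.log (2 * m) / n))
          (U * Real.log (2 * m) / n) := by
  intro m n U μ hm hn hU hμ hs hb h0
  have : NeZero m := ⟨by omega⟩
  exact MB.final n U μ hn hU hμ hs hb h0

end
end
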